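/- Let T > 0. Let (λ_k)_{k≥1} be a sequence of positive real numbers with ∑_{k≥1} 1/λ_k < +∞. Let (Φ_k)_{k≥1} be a sequence of nonzero real numbers, and set T₀ = limsup_{k→∞} ( −log|Φ_k| / λ_k ); assume T₀ < T (in particular T₀ < +∞). Let (u_k)_{k≥1} be a real sequence with ∑_{k≥1} u_k² < +∞, and let (q_k)_{k≥1} be functions in L²(0,T) such that for every ε > 0 there exists C_ε > 0 with ‖q_k‖_{L²(0,T)} ≤ C_ε · e^{ε λ_k} for all k ≥ 1. Then ∑_{k≥1} ( e^{−λ_k T} · |u_k| / |Φ_k| ) · ‖q_k‖_{L²(0,T)} < +∞; in particular the series ∑_{k≥1} ( e^{−λ_k T} · u_k / Φ_k ) · q_k converges absolutely in L²(0,T). -/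

import Mathlib

open MeasureTheory

/-!
Fix `limsup (-log |Φ_k| / λ_k) < S < R < T`. Then `1 / Φ_k = O(e^{S λ_k})`, and the factors `u_k`
and `q_k`, which are `O(e^{ε λ_k})` for every `ε > 0`, only raise the exponent from `S` to `R`. The
weight `e^{-λ_k T}` leaves a remainder `O(e^{-(T - R) λ_k})`, which is summable because
`e^{-x} ≤ 1 / x` for `x > 0`.
-/

open Filter Asymptotics

section ExponentialWeights

variable {ι : Type*} {lam : ι → ℝ}

theorem summable_exp_neg_mul_of_summable_one_div (hlam : ∀ k, 0 < lam k)
    (hsum : Summable fun k => 1 / lam k) {δ : ℝ} (hδ : 0 < δ) :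
    Summable fun k => Real.exp (-δ * lam k) := by
  refine (hsum.mul_left δ⁻¹).of_nonneg_of_le (fun k => (Real.exp_pos _).le) fun k => ?_
  have hpos : 0 < δ * lam k := mul_pos hδ (hlam k)
  calc Real.exp (-δ * lam k) = (Real.exp (δ * lam k))⁻¹ := by rw [neg_mul, Real.exp_neg]
    _ ≤ (δ * lam k)⁻¹ := by
      gcongr
      exact (lt_add_one _).le.trans (Real.add_one_le_exp _)
    _ = δ⁻¹ * (1 / lam k) := by rw [mul_inv, one_div]

theorem tendsto_cofinite_atTop_of_summable_exp_neg (h : Summable fun k => Real.exp (-lam k)) :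
    Tendsto lam cofinite atTop :=
  tendsto_neg_atBot_iff.mp (Real.tendsto_exp_comp_nhds_zero.mp h.tendsto_cofinite_zero)

theorem isBigO_inv_exp_of_limsup_neg_log_div_lt {𝕜 : Type*} [NormedDivisionRing 𝕜] {l : Filter ι}
    {Φ : ι → 𝕜} {S : ℝ} (hlam : ∀ᶠ k in l, 0 < lam k) (hΦ : ∀ᶠ k in l, Φ k ≠ 0)
    (hS : limsup (fun k => ((-Real.log ‖Φ k‖ / lam k : ℝ) : EReal)) l < (S : EReal)) :
    (fun k => (Φ k)⁻¹) =O[l] fun k => Real.exp (S * lam k) := by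
  refine .of_bound' ?_
  filter_upwards [hlam, hΦ, eventually_lt_of_limsup_lt hS] with k hpos hne hlt
  have hlog : -Real.log ‖Φ k‖ < S * lam k := (div_lt_iff₀ hpos).mp (EReal.coe_lt_coe_iff.mp hlt)
  calc ‖(Φ k)⁻¹‖ = Real.exp (-Real.log ‖Φ k‖) := by
        rw [norm_inv, Real.exp_neg, Real.exp_log (norm_pos_iff.mpr hne)]
    _ ≤ Real.exp (S * lam k) := Real.exp_le_exp.mpr hlog.le
    _ = ‖Real.exp (S * lam k)‖ := (Real.norm_of_nonneg (Real.exp_pos _).le).symm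

theorem summable_exp_neg_mul_norm_of_isBigO {E : Type*} [SeminormedAddCommGroup E] {f : ι → E}
    {R T : ℝ} (hsum : Summable fun k => Real.exp (-(T - R) * lam k))
    (hf : f =O[cofinite] fun k => Real.exp (R * lam k)) :
    Summable fun k => Real.exp (-lam k * T) * ‖f k‖ := by
  refine summable_of_isBigO hsum ?_
  refine ((isBigO_refl (fun k => Real.exp (-lam k * T)) cofinite).mul hf.norm_left).congr_right ?_
  intro k
  rw [← Real.exp_add]
  ring_nf

end ExponentialWeights

/-- Subexponential growth of a family `f` relative to the exponents `lam`: `f` is `O(e^{ε lam})` for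
every `ε > 0`. The cofinite filter plays the role of `k → ∞` on an arbitrary index type. -/
def IsSubexponential {ι E : Type*} [Norm E] (lam : ι → ℝ) (f : ι → E) : Prop :=
  ∀ ε > 0, f =O[cofinite] fun k => Real.exp (ε * lam k)

namespace IsSubexponential

variable {ι : Type*} {lam : ι → ℝ}

theorem iff_exists_forall_norm_le {E : Type*} [SeminormedAddCommGroup E] {f : ι → E} :
    IsSubexponential lam f ↔ ∀ ε > 0, ∃ C > 0, ∀ k, ‖f k‖ ≤ C * Real.exp (ε * lam k) := by
  refine forall₂_congr fun ε _ => ⟨fun h => ?_, fun ⟨C, _, hC⟩ => ?_⟩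
  · obtain ⟨C, hC, hbound⟩ := bound_of_isBigO_cofinite h
    refine ⟨C, hC, fun k => ?_⟩
    simpa only [Real.norm_eq_abs, Real.abs_exp] using @hbound k (Real.exp_ne_zero _)
  · refine .of_bound C (.of_forall fun k => ?_)
    simpa only [Real.norm_eq_abs, Real.abs_exp] using hC k

theorem of_isBigO_one {E : Type*} [Norm E] {f : ι → E} (hlam : ∀ᶠ k in cofinite, 0 ≤ lam k)
    (hf : f =O[cofinite] fun _ => (1 : ℝ)) : IsSubexponential lam f := by
  refine fun ε hε => hf.trans (.of_bound' ?_)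
  filter_upwards [hlam] with k hk
  rw [norm_one, Real.norm_of_nonneg (Real.exp_pos _).le]
  exact Real.one_le_exp (mul_nonneg hε.le hk)

theorem of_summable_sq {u : ι → ℝ} (hlam : ∀ᶠ k in cofinite, 0 ≤ lam k)
    (hu : Summable fun k => u k ^ 2) : IsSubexponential lam u := by
  have hsq : (fun k => u k ^ 2) =O[cofinite] fun _ => (1 : ℝ) ^ 2 := by
    simpa only [one_pow] using hu.tendsto_cofinite_zero.isBigO_one ℝ
  exact .of_isBigO_one hlam (hsq.of_pow two_ne_zero)

variable {𝕜 E : Type*} [SeminormedRing 𝕜] [SeminormedAddCommGroup E] [Module 𝕜 E]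
  [IsBoundedSMul 𝕜 E] {c : ι → 𝕜} {f : ι → E}

theorem isBigO_smul {S R : ℝ} (hf : IsSubexponential lam f) (hSR : S < R)
    (hc : c =O[cofinite] fun k => Real.exp (S * lam k)) :
    (fun k => c k • f k) =O[cofinite] fun k => Real.exp (R * lam k) := by
  refine (hc.smul (hf (R - S) (sub_pos.mpr hSR))).congr_right fun k => ?_
  rw [smul_eq_mul, ← Real.exp_add]
  ring_nf

theorem smul (hc : IsSubexponential lam c) (hf : IsSubexponential lam f) :
    IsSubexponential lam fun k => c k • f k :=
  fun ε hε => hf.isBigO_smul (half_lt_self hε) (hc (ε / 2) (half_pos hε))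

end IsSubexponential

theorem control_series_summable_general {ι 𝕜 E : Type*} [RCLike 𝕜] [NormedAddCommGroup E]
    [NormedSpace 𝕜 E] [CompleteSpace E] {T : ℝ} {lam : ι → ℝ}
    (hsum : ∀ δ > 0, Summable fun k => Real.exp (-δ * lam k))
    {Φ : ι → 𝕜} (hΦ : ∀ k, Φ k ≠ 0)
    (hT0 : limsup (fun k => ((-Real.log ‖Φ k‖ / lam k : ℝ) : EReal)) cofinite < (T : EReal))
    {u : ι → 𝕜} (hu : IsSubexponential lam u) {q : ι → E} (hq : IsSubexponential lam q) :
    (Summable fun k => Real.exp (-lam k * T) * ‖u k‖ / ‖Φ k‖ * ‖q k‖) ∧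
    Summable fun k => ((Real.exp (-lam k * T) : 𝕜) * u k / Φ k) • q k := by
  obtain ⟨S, hS, hST⟩ := EReal.lt_iff_exists_real_btwn.mp hT0
  obtain ⟨R, hSR, hRT⟩ := exists_between (EReal.coe_lt_coe_iff.mp hST)
  have hlam : Tendsto lam cofinite atTop :=
    tendsto_cofinite_atTop_of_summable_exp_neg (by simpa only [neg_one_mul] using hsum 1 one_pos)
  have hterm : (fun k => (Φ k)⁻¹ • u k • q k) =O[cofinite] fun k => Real.exp (R * lam k) :=
    (hu.smul hq).isBigO_smul hSR
      (isBigO_inv_exp_of_limsup_neg_log_div_lt (hlam.eventually_gt_atTop 0) (.of_forall hΦ) hS)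
  have hnorm : Summable fun k => Real.exp (-lam k * T) * ‖u k‖ / ‖Φ k‖ * ‖q k‖ := by
    refine (summable_exp_neg_mul_norm_of_isBigO (hsum _ (sub_pos.mpr hRT)) hterm).congr fun k => ?_
    rw [norm_smul, norm_smul, norm_inv]
    ring
  refine ⟨hnorm, .of_norm (hnorm.congr fun k => ?_)⟩
  rw [norm_smul, norm_div, norm_mul, RCLike.norm_ofReal, Real.abs_exp]

/-- Key estimate for the null control: if `T₀ = limsup_k (-log|Φ_k|/λ_k) < T`,
`∑ 1/λ_k < ∞`, `∑ u_k² < ∞` and `‖q_k‖_{L²(0,T)} ≤ C_ε e^{ε λ_k}` for every `ε > 0`,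
then `∑_k (e^{-λ_k T} |u_k| / |Φ_k|) ‖q_k‖ < ∞`; in particular the series
`∑_k (e^{-λ_k T} u_k / Φ_k) q_k` converges absolutely in `L²(0,T)`. -/
theorem control_series_summable (T : ℝ) (hT : 0 < T)
    (lam : ℕ → ℝ) (hlam : ∀ k, 0 < lam k)
    (hsum : Summable fun k => 1 / lam k)
    (Φ : ℕ → ℝ) (hΦ : ∀ k, Φ k ≠ 0)
    (hT0 : Filter.limsup (fun k => ((-Real.log |Φ k| / lam k : ℝ) : EReal))
        Filter.atTop < (T : EReal))
    (u : ℕ → ℝ) (hu : Summable fun k => u k ^ 2)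
    (q : ℕ → Lp ℝ 2 (volume.restrict (Set.Ioo (0 : ℝ) T)))
    (hq : ∀ ε > 0, ∃ C > 0, ∀ k, ‖q k‖ ≤ C * Real.exp (ε * lam k)) :
    (Summable fun k => Real.exp (-lam k * T) * |u k| / |Φ k| * ‖q k‖) ∧
    Summable fun k => (Real.exp (-lam k * T) * u k / Φ k) • q k :=
  control_series_summable_general
    (fun _ hδ => summable_exp_neg_mul_of_summable_one_div hlam hsum hδ) hΦ
    (Nat.cofinite_eq_atTop ▸ hT0) (.of_summable_sq (.of_forall fun k => (hlam k).le) hu)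
    (IsSubexponential.iff_exists_forall_norm_le.mpr hq)
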